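/- For every n ≥ 1 there exists a matrix B ∈ SL(n, ℝ) all of whose square minors are nonzero: for every k with 1 ≤ k ≤ n and all subsets K, I ⊆ {1, …, n} with |K| = |I| = k, the determinant of the k×k submatrix of B with rows indexed by K and columns indexed by I is nonzero. -/

import Mathlib

open Matrix

/-!
Every square submatrix of a Cauchy matrix `(1 / (x i - y j))` is again a Cauchy matrix, so it
suffices that a square Cauchy matrix with pairwise distinct nodes is nonsingular. By the barycentric
formula, `∑ j, v j / (x - y j)` is, up to the nonzero factor `∏ j, (x - y j)`, the polynomial of
degree less than the number of nodes that takes the value `v j / w j` at `y j`, where the `w j ≠ 0`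
are the barycentric weights. If `v` is in the kernel, this polynomial vanishes at every `x i`, hence
identically, and `v = 0`. Multiplying one row by the inverse of the determinant then gives
determinant `1` and keeps all minors nonzero.
-/

theorem nonempty_embedding_of_enatCard_le {α β : Type*} [Countable α]
    (h : ENat.card α ≤ ENat.card β) : Nonempty (α ↪ β) :=
  Cardinal.lift_mk_le'.mp <|
    (Cardinal.toENat_le_iff_of_le_aleph0 (by simp)).mp
      (by simpa only [ENat.card, Cardinal.toENat_lift] using h)

section Lagrange

open Polynomial

variable {ι K : Type*} [DecidableEq ι] [Field K]

theorem eval_interpolate_div_nodalWeight {s : Finset ι} {y : ι → K} (hy : Set.InjOn y s)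
    (v : ι → K) {x : K} (hx : ∀ j ∈ s, x ≠ y j) :
    eval x (Lagrange.interpolate s y (v / Lagrange.nodalWeight s y)) =
      eval x (Lagrange.nodal s y) * ∑ j ∈ s, (x - y j)⁻¹ * v j := by
  rw [Lagrange.eval_interpolate_not_at_node _ hx]
  refine congrArg _ (Finset.sum_congr rfl fun j hj ↦ ?_)
  have hw : Lagrange.nodalWeight s y j ≠ 0 := Lagrange.nodalWeight_ne_zero hy hj
  rw [Pi.div_apply]
  field

end Lagrange

section Cauchy

variable {m n ι K : Type*} [Field K]

/-- The Cauchy matrix with entries `1 / (x i - y j)`. The signed convention, instead of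
`1 / (x i + y j)`, makes `y` the nodes of Lagrange interpolation; an entry with `x i = y j`
has the junk value `0`. -/
def cauchyMatrix (x : m → K) (y : n → K) : Matrix m n K :=
  of fun i j ↦ (x i - y j)⁻¹

theorem det_cauchyMatrix_ne_zero [Fintype ι] [DecidableEq ι] {x y : ι → K}
    (hx : Function.Injective x) (hy : Function.Injective y) (hxy : ∀ i j, x i ≠ y j) :
    (cauchyMatrix x y).det ≠ 0 := by
  intro hdet
  obtain ⟨v, hv, hker⟩ := exists_mulVec_eq_zero_iff.mpr hdet
  let w := Lagrange.nodalWeight Finset.univ y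
  let p := Lagrange.interpolate Finset.univ y (v / w)
  have hroot (i : ι) : p.eval (x i) = 0 := by
    rw [eval_interpolate_div_nodalWeight hy.injOn v fun j _ ↦ hxy i j]
    exact mul_eq_zero_of_right _ (congrFun hker i)
  have hp : p = 0 :=
    Polynomial.eq_zero_of_degree_lt_of_eval_index_eq_zero Finset.univ hx.injOn
      (Lagrange.degree_interpolate_lt _ hy.injOn) fun i _ ↦ hroot i
  refine hv (funext fun j ↦ ?_)
  have hw : w j ≠ 0 := Lagrange.nodalWeight_ne_zero hy.injOn (Finset.mem_univ j)
  have hvalue : v j / w j = 0 := calc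
    v j / w j = p.eval (y j) :=
      (Lagrange.eval_interpolate_at_node (v / w) hy.injOn (Finset.mem_univ j)).symm
    _ = 0 := by rw [hp, Polynomial.eval_zero]
  exact (div_eq_zero_iff.mp hvalue).resolve_right hw

end Cauchy

section TotallyNonsingular

variable {m n R K : Type*} [CommRing R] [Field K]

/-- A matrix is totally nonsingular if all its square minors are nonzero. The row and column sets of
a minor are encoded by injections from `Fin k`: their enumeration changes the minor only by a sign,
and the index types need no order. -/
def IsTotallyNonsingular (A : Matrix m n R) : Prop :=
  ∀ (k : ℕ) (f : Fin k ↪ m) (g : Fin k ↪ n), (A.submatrix f g).det ≠ 0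

theorem isTotallyNonsingular_cauchyMatrix {x : m → K} {y : n → K} (hx : Function.Injective x)
    (hy : Function.Injective y) (hxy : ∀ i j, x i ≠ y j) :
    IsTotallyNonsingular (cauchyMatrix x y) :=
  fun _ f g ↦ det_cauchyMatrix_ne_zero (hx.comp f.injective) (hy.comp g.injective)
    fun i j ↦ hxy (f i) (g j)

namespace IsTotallyNonsingular

theorem det_ne_zero [Fintype n] [DecidableEq n] {A : Matrix n n R} (hA : IsTotallyNonsingular A) :
    A.det ≠ 0 := by
  let e := (Fintype.equivFin n).symm
  rw [← det_submatrix_equiv_self e A]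
  exact hA _ e.toEmbedding e.toEmbedding

theorem diagonal_mul [IsDomain R] [Fintype m] [DecidableEq m] {A : Matrix m n R}
    (hA : IsTotallyNonsingular A) {d : m → R} (hd : ∀ i, d i ≠ 0) :
    IsTotallyNonsingular (diagonal d * A) := by
  intro k f g
  have hsub : (diagonal d * A).submatrix f g = of fun i j ↦ d (f i) * A.submatrix f g i j := by
    ext i j
    exact Matrix.diagonal_mul d A (f i) (g j)
  rw [hsub, det_mul_column]
  exact mul_ne_zero (Finset.prod_ne_zero_iff.mpr fun i _ ↦ hd (f i)) (hA k f g)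

theorem exists_det_eq_one [Fintype n] [DecidableEq n] {A : Matrix n n K}
    (hA : IsTotallyNonsingular A) :
    ∃ B : Matrix n n K, B.det = 1 ∧ IsTotallyNonsingular B := by
  rcases isEmpty_or_nonempty n with _ | ⟨⟨i₀⟩⟩
  · exact ⟨A, det_isEmpty, hA⟩
  let d : n → K := Pi.mulSingle i₀ A.det⁻¹
  have hd (i : n) : d i ≠ 0 := by
    rcases eq_or_ne i i₀ with rfl | hi
    · simpa [d] using hA.det_ne_zero
    · simp [d, hi]
  refine ⟨diagonal d * A, ?_, hA.diagonal_mul hd⟩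
  rw [det_mul, det_diagonal, Fintype.prod_pi_mulSingle', inv_mul_cancel₀ hA.det_ne_zero]

end IsTotallyNonsingular

theorem exists_isTotallyNonsingular_of_embedding (e : m ⊕ n ↪ K) :
    ∃ A : Matrix m n K, IsTotallyNonsingular A :=
  ⟨cauchyMatrix (e ∘ Sum.inl) (e ∘ Sum.inr),
    isTotallyNonsingular_cauchyMatrix (e.injective.comp Sum.inl_injective)
      (e.injective.comp Sum.inr_injective) fun _ _ ↦ e.injective.ne Sum.inl_ne_inr⟩

end TotallyNonsingular

theorem stmt14_general {n K : Type*} [Fintype n] [DecidableEq n] [Field K]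
    (hK : 2 * ENat.card n ≤ ENat.card K) :
    ∃ B : Matrix n n K, B.det = 1 ∧ IsTotallyNonsingular B := by
  obtain ⟨e⟩ : Nonempty (n ⊕ n ↪ K) :=
    nonempty_embedding_of_enatCard_le (by rwa [ENat.card_sum, ← two_mul])
  obtain ⟨A, hA⟩ := exists_isTotallyNonsingular_of_embedding e
  exact hA.exists_det_eq_one

/-- For every `n ≥ 1` there exists `B ∈ SL(n, ℝ)` all of whose square
minors are nonzero: for every `1 ≤ k ≤ n` and all row/column index sets `K, I` of
cardinality `k`, the determinant of the `k × k` submatrix of `B` with rows `K` and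
columns `I` is nonzero. -/
theorem stmt14 (n : ℕ) (hn : 1 ≤ n) :
    ∃ B : Matrix (Fin n) (Fin n) ℝ, B.det = 1 ∧
      ∀ k : ℕ, 1 ≤ k → k ≤ n → ∀ K I : Finset (Fin n),
        ∀ (hK : K.card = k) (hI : I.card = k),
          (B.submatrix (⇑(K.orderEmbOfFin hK)) (⇑(I.orderEmbOfFin hI))).det ≠ 0 := by
  obtain ⟨B, hdet, hB⟩ := stmt14_general (n := Fin n) (K := ℝ) (by simp)
  exact ⟨B, hdet, fun k _ _ K I hK hI ↦
    hB k (K.orderEmbOfFin hK).toEmbedding (I.orderEmbOfFin hI).toEmbedding⟩
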